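/- Let V be a finite set and f : 2^V → ℝ normalized, monotone and submodular, and let k_f ∈ [0,1) be a curvature bound for f (f(V) − f(V \ {v}) ≥ (1 − k_f)·f({v}) for every v ∈ V). Then for every A ⊆ V, f(A) ≥ (1 − k_f) · Σ_{a ∈ A} f({a}). -/

import Mathlib

/-!
Submodularity means diminishing returns: removing `r ⊆ s` costs at least as much from `s` as from
a larger set `t`. Building `A` up one element at a time from `∅`, each element `a` therefore
contributes at least `f E - f (E \ {a})`, its marginal value in the whole ground set `E`, and the
curvature bound compares that value with `f {a}`.
-/

/-- Submodular functions on a lattice; the set functions of combinatorial optimization are the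
case of the lattice `Finset V`, where `⊔` and `⊓` are `∪` and `∩`. -/
def IsSubmodular {α β : Type*} [Lattice α] [Add β] [LE β] (f : α → β) : Prop :=
  ∀ a b, f (a ⊔ b) + f (a ⊓ b) ≤ f a + f b

namespace IsSubmodular

variable {M : Type*} [AddCommGroup M] [PartialOrder M] [IsOrderedAddMonoid M]

theorem sub_sdiff_le_sub_sdiff {α : Type*} [GeneralizedBooleanAlgebra α] {f : α → M}
    (hf : IsSubmodular f) {r s t : α} (hrs : r ≤ s) (hst : s ≤ t) :
    f t - f (t \ r) ≤ f s - f (s \ r) := by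
  have hsup : s ⊔ t \ r = t := by
    rw [← sup_eq_left.2 hrs, sup_assoc, sup_sdiff_cancel_right (hrs.trans hst),
      sup_eq_right.2 hst]
  have hinf : s ⊓ t \ r = s \ r := by rw [← inf_sdiff_assoc, inf_eq_left.2 hst]
  have h := hf s (t \ r)
  rw [hsup, hinf] at h
  rwa [sub_le_sub_iff]

theorem add_sum_sub_sdiff_singleton_le {V : Type*} [DecidableEq V] {f : Finset V → M}
    (hf : IsSubmodular f) {A E : Finset V} (hAE : A ⊆ E) :
    f ∅ + ∑ a ∈ A, (f E - f (E \ {a})) ≤ f A := by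
  induction A using Finset.induction_on with
  | empty => simp
  | insert a s ha ih =>
    have hmarginal : f E - f (E \ {a}) ≤ f (insert a s) - f s := by
      simpa only [Finset.sdiff_singleton_eq_erase, Finset.erase_insert ha] using
        hf.sub_sdiff_le_sub_sdiff
          (Finset.singleton_subset_iff.2 (Finset.mem_insert_self a s)) hAE
    calc f ∅ + ∑ b ∈ insert a s, (f E - f (E \ {b}))
        = (f E - f (E \ {a})) + (f ∅ + ∑ b ∈ s, (f E - f (E \ {b}))) := by
          rw [Finset.sum_insert ha, add_left_comm]
      _ ≤ (f (insert a s) - f s) + f s :=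
          add_le_add hmarginal (ih ((Finset.subset_insert a s).trans hAE))
      _ = f (insert a s) := sub_add_cancel _ _

end IsSubmodular

theorem curvature_sum_lower_bound_general {V R : Type*} [DecidableEq V]
    [Ring R] [PartialOrder R] [IsOrderedAddMonoid R] {f : Finset V → R} (hf : IsSubmodular f)
    {E : Finset V} {k : R} (hcurv : ∀ v ∈ E, (1 - k) * f {v} ≤ f E - f (E \ {v}))
    {A : Finset V} (hAE : A ⊆ E) :
    f ∅ + (1 - k) * ∑ a ∈ A, f {a} ≤ f A :=
  calc f ∅ + (1 - k) * ∑ a ∈ A, f {a}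
      = f ∅ + ∑ a ∈ A, (1 - k) * f {a} := by rw [Finset.mul_sum]
    _ ≤ f ∅ + ∑ a ∈ A, (f E - f (E \ {a})) := by
        gcongr with a ha
        exact hcurv a (hAE ha)
    _ ≤ f A := hf.add_sum_sub_sdiff_singleton_le hAE

/-- For a normalized monotone submodular `f` with curvature bound
`k_f ∈ [0,1)`, every set satisfies `f(A) ≥ (1 - k_f) · Σ_{a ∈ A} f({a})`. -/
theorem curvature_sum_lower_bound
    {V : Type*} [Fintype V] [DecidableEq V]
    (f : Finset V → ℝ)
    (hf0 : f ∅ = 0)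
    (hfmono : ∀ A B : Finset V, A ⊆ B → f A ≤ f B)
    (hfsub : ∀ A B : Finset V, f A + f B ≥ f (A ∪ B) + f (A ∩ B))
    (kf : ℝ) (hkf0 : 0 ≤ kf) (hkf1 : kf < 1)
    (hcurv : ∀ v : V, f Finset.univ - f (Finset.univ \ {v}) ≥ (1 - kf) * f {v}) :
    ∀ A : Finset V, f A ≥ (1 - kf) * ∑ a ∈ A, f {a} := by
  intro A
  simpa only [hf0, zero_add] using
    curvature_sum_lower_bound_general hfsub (fun v _ => hcurv v) (Finset.subset_univ A)
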